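/- Assume m_j > 0, k_j > 0, b_j ≥ 0 for all j = 1,…,n. Fix j ∈ [1, n−1] and suppose (−λ)·g_j(λ)/(f_j, g_j) ≪ f_j(λ)/(f_j, g_j). If b_{j+1} ≠ 0 and the linear polynomial k_{j+1} − λ·b_{j+1} divides f_j(λ)/(f_j, g_j), then (f_{j+1}, g_{j+1}) = (f_j, g_j)·(λ − k_{j+1}/b_{j+1}) and f_{j+1}(λ)/(f_{j+1}, g_{j+1}) ≪ −f_j(λ)/(f_j, g_j). -/

import Mathlib

open Polynomial

/-- The tridiagonal matrix of order `j` built from `k 1, …, k j` (1-indexed):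
diagonal entries `k r + k (r+1)` for `r < j`, last diagonal entry `k j`,
off-diagonal entries `-(k (r+1))`. -/
noncomputable def triMat (k : ℕ → ℝ) (j : ℕ) : Matrix (Fin j) (Fin j) ℝ :=
  Matrix.of fun r c =>
    if (r : ℕ) = (c : ℕ) then
      (if (r : ℕ) = j - 1 then k j else k ((r : ℕ) + 1) + k ((r : ℕ) + 2))
    else if (r : ℕ) + 1 = (c : ℕ) then -k ((c : ℕ) + 1)
    else if (c : ℕ) + 1 = (r : ℕ) then -k ((r : ℕ) + 1)
    else 0

/-- The matrix `K_j - λ (M_j + B_j)` with entries in `ℝ[λ]`. -/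
noncomputable def sysMat (m k b : ℕ → ℝ) (j : ℕ) :
    Matrix (Fin j) (Fin j) (Polynomial ℝ) :=
  (triMat k j).map Polynomial.C -
    (Polynomial.X : Polynomial ℝ) •
      ((Matrix.diagonal (fun i : Fin j => m ((i : ℕ) + 1)) + triMat b j).map Polynomial.C)

/-- `f_j(λ) = det (K_j - λ (M_j + B_j))`. -/
noncomputable def fpoly (m k b : ℕ → ℝ) (j : ℕ) : Polynomial ℝ :=
  (sysMat m k b j).det

/-- `g_j(λ)`: the leading principal minor of order `j-1` of `K_j - λ (M_j + B_j)`
(so `g 1 = 1`, the determinant of the empty matrix). -/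
noncomputable def gpoly (m k b : ℕ → ℝ) (j : ℕ) : Polynomial ℝ :=
  ((sysMat m k b j).submatrix (Fin.castLE (Nat.sub_le j 1))
    (Fin.castLE (Nat.sub_le j 1))).det

/-- `Prec g f` formalizes `g ≪ f`: both polynomials have degree `s ≥ 1`, each has `s`
distinct real roots, the leading coefficients `c`, `d` have the same sign, and the roots
strictly interlace as `β 0 < α 0 < β 1 < α 1 < ⋯ < β (s-1) < α (s-1)`. -/
def Prec (g f : Polynomial ℝ) : Prop :=
  ∃ (s : ℕ) (c d : ℝ) (α β : Fin s → ℝ),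
    0 < s ∧ 0 < c * d ∧ StrictMono α ∧ StrictMono β ∧
    f = Polynomial.C c * ∏ i, (Polynomial.X - Polynomial.C (α i)) ∧
    g = Polynomial.C d * ∏ i, (Polynomial.X - Polynomial.C (β i)) ∧
    (∀ i, β i < α i) ∧
    ∀ (i : Fin s) (h : (i : ℕ) + 1 < s), α i < β ⟨(i : ℕ) + 1, h⟩

/-- General symmetric tridiagonal matrix. -/
noncomputable def tri5 (a e : ℕ → ℝ[X]) (n : ℕ) : Matrix (Fin n) (Fin n) ℝ[X] :=
  Matrix.of fun r c =>
    if (r : ℕ) = (c : ℕ) then a r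
    else if (r : ℕ) + 1 = (c : ℕ) then -e c
    else if (c : ℕ) + 1 = (r : ℕ) then -e r
    else 0

theorem tri5_det (a e : ℕ → ℝ[X]) (n : ℕ) :
    (tri5 a e (n+2)).det = a (n+1) * (tri5 a e (n+1)).det - e (n+1) ^ 2 * (tri5 a e n).det := by
  rw [Matrix.det_succ_row _ (Fin.last (n+1)), Fin.sum_univ_castSucc, Fin.sum_univ_castSucc]
  rw [Finset.sum_eq_zero]
  · have h1 : (tri5 a e (n+2)).submatrix (Fin.last (n+1)).succAbove (Fin.last (n+1)).succAbove
        = tri5 a e (n+1) := by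
      ext1 r c
      simp [tri5]
    have h2 : ((tri5 a e (n+2)).submatrix (Fin.last (n+1)).succAbove
        (Fin.last n).castSucc.succAbove).det = - e (n+1) * (tri5 a e n).det := by
      rw [Matrix.det_succ_column _ (Fin.last n), Fin.sum_univ_castSucc, Finset.sum_eq_zero]
      · have h3 : ((tri5 a e (n+2)).submatrix (Fin.last (n+1)).succAbove
          (Fin.last n).castSucc.succAbove).submatrix (Fin.last n).succAbove (Fin.last n).succAbove
            = tri5 a e n := by
          ext1 r c
          have : (Fin.last n).castSucc.succAbove c.castSucc = c.castSucc.castSucc :=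
            Fin.succAbove_of_castSucc_lt _ _ (by simp [Fin.lt_def])
          simp [tri5, this]
        rw [h3]
        simp [tri5]
      · intro i _
        have : ¬ ((i:ℕ) = n + 1) := by omega
        have : ¬ ((i:ℕ) = n) := by omega
        have : ¬ (n + 1 + 1 = (i:ℕ)) := by omega
        simp [tri5, *]
    rw [h1, h2]
    have : ((-1 : ℝ[X])) ^ (n + 1 + (n + 1)) = 1 := Even.neg_one_pow ⟨n+1, rfl⟩
    have h' : ((-1 : ℝ[X])) ^ (n + 1 + n) = -1 := Odd.neg_one_pow ⟨n, by ring⟩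
    have e1 : tri5 a e (n+2) (Fin.last (n+1)) (Fin.last n).castSucc = - e (n+1) := by
      have : ¬ (n + 1 + 1 = n) := by omega
      simp [tri5, this]
    have e2 : tri5 a e (n+2) (Fin.last (n+1)) (Fin.last (n+1)) = a (n+1) := by
      simp [tri5]
    rw [e1, e2]
    simp only [Fin.val_last, Fin.val_castSucc, this, h']
    ring
  · intro i _
    have : ¬ (n + 1 = (i:ℕ)) := by omega
    have : ¬ (n + 1 + 1 = (i:ℕ)) := by omega
    have : ¬ ((i:ℕ) = n) := by omega
    simp [tri5, *]

theorem tri5_congr (a a' e : ℕ → ℝ[X]) (n : ℕ) (h : ∀ i < n, a i = a' i) :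
    tri5 a e n = tri5 a' e n := by
  ext1 r c
  simp [tri5, h r r.2]

/-- `p_i = k_i - λ b_i` -/
noncomputable def pp5 (k b : ℕ → ℝ) (i : ℕ) : ℝ[X] := C (k i) - C (b i) * X

noncomputable def aa5 (m k b : ℕ → ℝ) (i : ℕ) : ℝ[X] :=
  pp5 k b (i+1) + pp5 k b (i+2) - C (m (i+1)) * X

noncomputable def aal5 (m k b : ℕ → ℝ) (j i : ℕ) : ℝ[X] :=
  if i = j then pp5 k b (i+1) - C (m (i+1)) * X else aa5 m k b i

theorem fpoly_eq (m k b : ℕ → ℝ) (j : ℕ) :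
    fpoly m k b (j+1) = (tri5 (aal5 m k b j) (fun i => pp5 k b (i+1)) (j+1)).det := by
  unfold fpoly
  congr 1
  ext1 r c
  simp only [sysMat, triMat, tri5, aal5, aa5, pp5, Matrix.sub_apply, Matrix.map_apply,
    Matrix.smul_apply, Matrix.add_apply, Matrix.of_apply, Matrix.diagonal_apply, Fin.ext_iff,
    smul_eq_mul, Nat.add_sub_cancel]
  split_ifs with h1 h2 <;> simp_all <;> ring

theorem gpoly_eq (m k b : ℕ → ℝ) (j : ℕ) :
    gpoly m k b (j+1) = (tri5 (aa5 m k b) (fun i => pp5 k b (i+1)) j).det := by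
  unfold gpoly
  change Matrix.det (n := Fin j) _ = _
  congr 1
  ext1 r c
  have := r.2
  have h0 : (r : ℕ) ≠ j := by omega
  simp only [sysMat, triMat, tri5, aa5, pp5, Matrix.sub_apply, Matrix.map_apply,
    Matrix.smul_apply, Matrix.add_apply, Matrix.of_apply, Matrix.diagonal_apply, Fin.ext_iff,
    smul_eq_mul, Nat.add_sub_cancel, Matrix.submatrix_apply, Fin.val_castLE, h0]
  split_ifs with h1 h2 <;> simp_all <;> ring

theorem f_one (m k b : ℕ → ℝ) : fpoly m k b 1 = pp5 k b 1 - C (m 1) * X := by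
  rw [fpoly_eq]; simp [tri5, aal5]

theorem g_one (m k b : ℕ → ℝ) : gpoly m k b 1 = 1 := by
  rw [gpoly_eq]; simp

theorem f_rec0 (m k b : ℕ → ℝ) (j : ℕ) : fpoly m k b (j+2) =
    (pp5 k b (j+2) - C (m (j+2)) * X) * gpoly m k b (j+2)
      - pp5 k b (j+2) ^ 2 * gpoly m k b (j+1) := by
  rw [fpoly_eq, tri5_det, gpoly_eq, gpoly_eq,
    tri5_congr (aal5 m k b (j+1)) (aa5 m k b) _ (j+1), tri5_congr (aal5 m k b (j+1)) (aa5 m k b) _ j]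
  · simp [aal5]
  · intro i hi; simp [aal5]; omega
  · intro i hi; simp [aal5]; omega

theorem g_rec (m k b : ℕ → ℝ) (j : ℕ) : gpoly m k b (j+2) =
    fpoly m k b (j+1) + pp5 k b (j+2) * gpoly m k b (j+1) := by
  cases j with
  | zero => rw [f_one, g_one, gpoly_eq]; simp [tri5, aa5]; ring
  | succ j =>
    rw [f_rec0, gpoly_eq, tri5_det, ← gpoly_eq, ← gpoly_eq]
    simp [aa5]; ring

theorem f_rec (m k b : ℕ → ℝ) (j : ℕ) : fpoly m k b (j+2) =
    pp5 k b (j+2) * fpoly m k b (j+1) - C (m (j+2)) * X *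
      (fpoly m k b (j+1) + pp5 k b (j+2) * gpoly m k b (j+1)) := by
  rw [f_rec0, g_rec]; ring

theorem fg_pos (n : ℕ) (m k b : ℕ → ℝ)
    (hm : ∀ j, 1 ≤ j → j ≤ n → 0 < m j)
    (hk : ∀ j, 1 ≤ j → j ≤ n → 0 < k j)
    (hb : ∀ j, 1 ≤ j → j ≤ n → 0 ≤ b j) (x : ℝ) (hx : x ≤ 0) (j : ℕ) (hj : j + 1 ≤ n) :
    0 < (fpoly m k b (j+1)).eval x ∧ 0 < (gpoly m k b (j+1)).eval x := by
  have hp : ∀ i, 1 ≤ i → i ≤ n → 0 < (pp5 k b i).eval x := by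
    intro i h1 h2
    have := hk i h1 h2
    have := mul_nonneg (hb i h1 h2) (neg_nonneg.2 hx)
    simp [pp5]; linarith
  induction j with
  | zero =>
    rw [zero_add, f_one, g_one]
    have := hp 1 le_rfl hj
    have := mul_nonneg (hm 1 le_rfl hj).le (neg_nonneg.2 hx)
    simp; linarith
  | succ j ih =>
    obtain ⟨h1, h2⟩ := ih (by omega)
    have h3 := hp (j+2) (by omega) hj
    have h4 := mul_nonneg (hm (j+2) (by omega) hj).le (neg_nonneg.2 hx)
    have h5 : 0 < (gpoly m k b (j+2)).eval x := by
      rw [g_rec]; simp; positivity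
    refine ⟨?_, h5⟩
    rw [g_rec] at h5
    rw [f_rec]
    simp at h5 ⊢
    have := mul_pos h3 h1
    have := mul_nonneg h4 h5.le
    nlinarith

theorem sign_ge {s : ℕ} (i : Fin s) (T : Finset (Fin s)) (hT : ∀ l, i < l → l ∈ T)
    (x : ℝ) (y : Fin s → ℝ) (h1 : ∀ l ∈ T, l ≤ i → y l < x) (h2 : ∀ l, i < l → x < y l) :
    0 < (-1 : ℝ) ^ (s - 1 - (i : ℕ)) * ∏ l ∈ T, (x - y l) := by
  have : (-1 : ℝ) ^ (s - 1 - (i : ℕ)) = ∏ l ∈ T, (if i < l then (-1 : ℝ) else 1) := by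
    rw [Finset.prod_ite, Finset.prod_const, Finset.prod_const_one, mul_one, ← Fin.card_Ioi]
    congr 2
    ext l
    simp only [Finset.mem_Ioi, Finset.mem_filter]
    exact ⟨fun h => ⟨hT l h, h⟩, fun h => h.2⟩
  rw [this, ← Finset.prod_mul_distrib]
  apply Finset.prod_pos
  intro l hl
  split_ifs with h
  · linarith [h2 l h]
  · linarith [h1 l hl (not_lt.1 h)]

theorem root_between (P : ℝ[X]) (u v : ℝ) (huv : u < v) (h : P.eval u * P.eval v < 0) :
    ∃ z, u < z ∧ z < v ∧ P.eval z = 0 := by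
  have hc : ContinuousOn (fun x => P.eval x) (Set.Icc u v) := P.continuous.continuousOn
  rcases mul_neg_iff.1 h with ⟨h1, h2⟩ | ⟨h1, h2⟩
  · obtain ⟨z, hz, hz'⟩ := intermediate_value_Ioo' huv.le hc ⟨h2, h1⟩
    exact ⟨z, hz.1, hz.2, hz'⟩
  · obtain ⟨z, hz, hz'⟩ := intermediate_value_Ioo huv.le hc ⟨h1, h2⟩
    exact ⟨z, hz.1, hz.2, hz'⟩

theorem prec_of_signs {s : ℕ} (hs : 0 < s) (P : ℝ[X]) (hP : P.natDegree ≤ s) (c : ℝ)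
    (α : Fin s → ℝ) (hα : StrictMono α) (hpos : ∀ i, 0 < α i)
    (h0 : P.eval 0 * c * (-1) ^ s < 0)
    (h1 : ∀ i : Fin s, P.eval (α i) * c * (-1) ^ (s - 1 - (i : ℕ)) < 0) :
    Prec P (C (-c) * ∏ i, (X - C (α i))) := by
  have hex : ∀ i : Fin s, ∃ z, 0 < z ∧ z < α i ∧ P.eval z = 0 ∧ ∀ i' : Fin s, i' < i → α i' < z := by
    intro i
    have hi := h1 i
    have hneg : ∀ x y : ℝ, ∀ N : ℕ, x * c * (-1) ^ (N + 1) < 0 → y * c * (-1) ^ N < 0 →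
        x * y < 0 := by
      intro x y N hx hy
      have h3 := mul_pos_of_neg_of_neg hx hy
      have h4 : ((-1 : ℝ) ^ N) ^ 2 = 1 := by rw [← pow_mul, mul_comm, pow_mul]; simp
      have h5 : x * c * (-1) ^ (N + 1) * (y * c * (-1) ^ N) = - (x * y) * c ^ 2 * ((-1 : ℝ) ^ N) ^ 2 := by
        ring
      rw [h5, h4] at h3
      nlinarith [sq_nonneg c]
    by_cases h : (i : ℕ) = 0
    · obtain ⟨z, a1, a2, a3⟩ := root_between P 0 (α i) (hpos i) (hneg _ _ (s - 1 - (i:ℕ))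
        (by rw [h]; convert h0 using 2; congr 1; omega) hi)
      refine ⟨z, a1, a2, a3, fun i' hi' => ?_⟩
      rw [Fin.lt_def] at hi'; omega
    · let q : Fin s := ⟨(i:ℕ) - 1, by omega⟩
      have hq : q < i := by simp [Fin.lt_def, q]; omega
      obtain ⟨z, a1, a2, a3⟩ := root_between P (α q) (α i) (hα hq) (hneg _ _ (s - 1 - (i:ℕ))
        (by convert h1 q using 2; congr 1; simp [q]; omega) hi)
      refine ⟨z, (hpos q).trans a1, a2, a3, fun i' hi' => lt_of_le_of_lt (hα.monotone ?_) a1⟩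
      simp only [Fin.lt_def, Fin.le_def, q] at hi' ⊢; omega
  choose γ g0 g1 g2 g3 using hex
  have hγ : StrictMono γ := fun i i' h => (g1 i).trans (g3 i' i h)
  have hdv : ∏ i, (X - C (γ i)) ∣ P := by
    apply Finset.prod_dvd_of_coprime
    · exact (pairwise_coprime_X_sub_C hγ.injective).set_pairwise _
    · intro i _
      exact dvd_iff_isRoot.2 (g2 i)
  obtain ⟨q, hq⟩ := hdv
  have hP0 : P ≠ 0 := by rintro rfl; simp at h0
  have hq0 : q ≠ 0 := by rintro rfl; simp at hq; exact hP0 hq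
  have hmon : (∏ i, (X - C (γ i))).Monic := monic_prod_X_sub_C _ _
  have hdeg : q.natDegree = 0 := by
    have := hmon.natDegree_mul' hq0
    rw [← hq] at this
    have h2 : (∏ i, (X - C (γ i))).natDegree = s := by
      rw [natDegree_finsetProd_X_sub_C_eq_card]; simp
    omega
  obtain ⟨e, rfl⟩ : ∃ e, q = C e := ⟨_, eq_C_of_natDegree_eq_zero hdeg⟩
  refine ⟨s, -c, e, α, γ, hs, ?_, hα, hγ, rfl, by rw [mul_comm]; exact hq, g1, fun i h => g3 _ _ ?_⟩
  · rw [hq] at h0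
    simp [eval_prod, Finset.prod_neg] at h0
    have hpp : 0 < ∏ i, γ i := Finset.prod_pos fun i _ => g0 i
    have h4 : ((-1 : ℝ) ^ s) ^ 2 = 1 := by rw [← pow_mul, mul_comm, pow_mul]; simp
    have h5 : (-1) ^ s * (∏ i, γ i) * e * c * (-1) ^ s = (e * c * ∏ i, γ i) * ((-1 : ℝ) ^ s) ^ 2 := by ring
    rw [h5, h4, mul_one] at h0
    have := neg_of_mul_neg_left h0 hpp.le
    linarith
  · simp [Fin.lt_def]

theorem core5 {s : ℕ} (hs : 0 < s) (c d k b m : ℝ) (hb : 0 < b) (hm : 0 < m)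
    (hcd : 0 < c * d) (F G H : ℝ[X])
    (α β : Fin s → ℝ) (hα : StrictMono α) (hβ : StrictMono β) (hpos : ∀ i, 0 < α i)
    (hF : F = C c * ∏ i, (X - C (α i))) (hG : -X * G = C d * ∏ i, (X - C (β i)))
    (h1 : ∀ i, β i < α i) (h2 : ∀ (i : Fin s) (h : (i : ℕ) + 1 < s), α i < β ⟨(i : ℕ) + 1, h⟩)
    (hH : F = (C k - C b * X) * H) :
    (H + G).eval (k / b) ≠ 0 ∧ Prec (C (-b) * (F - C m * X * (H + G))) (-F) := by
  have hc0 : c ≠ 0 := by rintro rfl; simp at hcd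
  have hroot : F.eval (k / b) = 0 := by
    rw [hH]; simp; left; field_simp; simp
  obtain ⟨t, ht⟩ : ∃ t, k / b = α t := by
    rw [hF] at hroot
    simp [eval_prod, Finset.prod_eq_zero_iff, hc0, sub_eq_zero] at hroot
    exact hroot
  have hk : k = b * α t := by rw [← ht]; field_simp
  have hHe : H = C (-c / b) * ∏ i ∈ Finset.univ.erase t, (X - C (α i)) := by
    have hne : (C k - C b * X : ℝ[X]) ≠ 0 := by
      intro h
      have := congrArg (fun p => p.coeff 1) h
      simp at this; exact hb.ne' this
    apply mul_left_cancel₀ hne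
    rw [← hH, hF, ← Finset.mul_prod_erase _ _ (Finset.mem_univ t), hk]
    have : (C c : ℝ[X]) = C (-b) * C (-c / b) := by
      rw [← C_mul]; congr 1; field_simp
    rw [this]
    simp only [C_mul, C_neg]
    ring
  have sA : ∀ i : Fin s, 0 < (-1 : ℝ) ^ (s - 1 - (i : ℕ)) * ∏ l, (α i - β l) := by
    intro i
    apply sign_ge i _ (by simp)
    · intro l _ hl
      exact lt_of_le_of_lt (hβ.monotone hl) (h1 i)
    · intro l hl
      have hl' : (i : ℕ) + 1 < s := by have := l.2; rw [Fin.lt_def] at hl; omega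
      refine lt_of_lt_of_le (h2 i hl') (hβ.monotone ?_)
      rw [Fin.lt_def] at hl
      rw [Fin.le_def]; simp; omega
  have sB : ∀ i : Fin s, 0 < (-1 : ℝ) ^ (s - 1 - (i : ℕ)) *
      ∏ l ∈ Finset.univ.erase i, (α i - α l) := by
    intro i
    apply sign_ge i
    · intro l hl; simp [hl.ne']
    · intro l hl hl'
      exact hα (lt_of_le_of_ne hl' (Finset.ne_of_mem_erase hl))
    · intro l hl; exact hα hl
  have key : ∀ i : Fin s, α i * (H + G).eval (α i) * c * (-1) ^ (s - 1 - (i : ℕ)) < 0 := by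
    intro i
    have e1 : - α i * G.eval (α i) = d * ∏ l, (α i - β l) := by
      have := congrArg (eval (α i)) hG
      simpa [eval_prod] using this
    have e2 : α i * H.eval (α i) * c * (-1) ^ (s - 1 - (i : ℕ)) ≤ 0 := by
      by_cases hit : i = t
      · subst hit
        rw [hHe]
        simp only [eval_mul, eval_C, eval_prod, eval_sub, eval_X]
        have : α i * (-c / b * ∏ l ∈ Finset.univ.erase i, (α i - α l)) * c * (-1) ^ (s - 1 - (i : ℕ))
          = -(α i * (c ^ 2 / b) * ((-1) ^ (s - 1 - (i : ℕ)) *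
              ∏ l ∈ Finset.univ.erase i, (α i - α l))) := by ring
        rw [this]
        have := sB i
        have := hpos i
        rw [neg_nonpos]
        positivity
      · have : H.eval (α i) = 0 := by
          rw [hHe]
          simp only [eval_mul, eval_C, eval_prod, eval_sub, eval_X]
          rw [Finset.prod_eq_zero (i := i)] <;> simp [hit]
        simp [this]
    have e3 := mul_pos hcd (sA i)
    rw [eval_add]
    have : α i * (H.eval (α i) + G.eval (α i)) * c * (-1) ^ (s - 1 - (i : ℕ)) =
      α i * H.eval (α i) * c * (-1) ^ (s - 1 - (i : ℕ)) -
       (- α i * G.eval (α i)) * c * (-1) ^ (s - 1 - (i : ℕ)) := by ring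
    rw [this, e1]
    nlinarith
  refine ⟨?_, ?_⟩
  · rw [ht]
    intro h
    have := key t
    simp [h] at this
  have hnF : -F = C (-c) * ∏ i, (X - C (α i)) := by rw [hF]; simp
  have hFd : F.natDegree ≤ s := by
    rw [hF]
    refine (natDegree_C_mul_le _ _).trans ?_
    rw [natDegree_finsetProd_X_sub_C_eq_card]; simp
  have hGd : (X * G).natDegree ≤ s := by
    rw [← natDegree_neg, ← neg_mul, hG]
    refine (natDegree_C_mul_le _ _).trans ?_
    rw [natDegree_finsetProd_X_sub_C_eq_card]; simp
  have hHd : (X * H).natDegree ≤ s := by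
    refine natDegree_mul_le.trans ?_
    have : H.natDegree ≤ s - 1 := by
      rw [hHe]
      refine (natDegree_C_mul_le _ _).trans ?_
      rw [natDegree_finsetProd_X_sub_C_eq_card]; simp
    rw [natDegree_X]; omega
  rw [hnF]
  apply prec_of_signs hs _ _ _ _ hα hpos
  · have : (C (-b) * (F - C m * X * (H + G))).eval 0 * c * (-1) ^ s =
      -(b * c ^ 2 * (∏ i, α i) * ((-1 : ℝ) ^ s) ^ 2) := by
      rw [hF]; simp [eval_prod, Finset.prod_neg]; ring
    rw [this]
    have h4 : ((-1 : ℝ) ^ s) ^ 2 = 1 := by rw [← pow_mul, mul_comm, pow_mul]; simp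
    have hpp : 0 < ∏ i, α i := Finset.prod_pos fun i _ => hpos i
    rw [h4, neg_lt_zero]
    positivity
  · intro i
    have hFi : F.eval (α i) = 0 := by
      rw [hF]
      simp only [eval_mul, eval_C, eval_prod, eval_sub, eval_X]
      rw [Finset.prod_eq_zero (Finset.mem_univ i)] <;> simp
    have : (C (-b) * (F - C m * X * (H + G))).eval (α i) * c * (-1) ^ (s - 1 - (i : ℕ)) =
      b * m * (α i * (H + G).eval (α i) * c * (-1) ^ (s - 1 - (i : ℕ))) := by
      simp [hFi]; ring
    rw [this]
    exact mul_neg_of_pos_of_neg (mul_pos hb hm) (key i)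
  · refine (natDegree_C_mul_le _ _).trans ?_
    refine (natDegree_sub_le _ _).trans (max_le hFd ?_)
    rw [mul_assoc]
    refine (natDegree_C_mul_le _ _).trans ?_
    rw [mul_add]
    exact (natDegree_add_le _ _).trans (max_le hHd hGd)

/-- Lemma `two`(i): the case `b_{j+1} ≠ 0` and `(k_{j+1} − λ b_{j+1}) ∣ f_j/(f_j,g_j)`.
Here `gcd` is the monic-normalized gcd in `ℝ[λ]`. -/
theorem stmt_5 (n : ℕ) (m k b : ℕ → ℝ)
    (hm : ∀ j, 1 ≤ j → j ≤ n → 0 < m j)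
    (hk : ∀ j, 1 ≤ j → j ≤ n → 0 < k j)
    (hb : ∀ j, 1 ≤ j → j ≤ n → 0 ≤ b j)
    (j : ℕ) (hj1 : 1 ≤ j) (hj2 : j ≤ n - 1)
    (hyp : Prec (-Polynomial.X * gpoly m k b j / gcd (fpoly m k b j) (gpoly m k b j))
      (fpoly m k b j / gcd (fpoly m k b j) (gpoly m k b j)))
    (hbne : b (j + 1) ≠ 0)
    (hdvd : (Polynomial.C (k (j + 1)) - Polynomial.C (b (j + 1)) * Polynomial.X) ∣
      (fpoly m k b j / gcd (fpoly m k b j) (gpoly m k b j))) :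
    gcd (fpoly m k b (j + 1)) (gpoly m k b (j + 1)) =
      gcd (fpoly m k b j) (gpoly m k b j) *
        (Polynomial.X - Polynomial.C (k (j + 1) / b (j + 1))) ∧
    Prec
      (fpoly m k b (j + 1) / gcd (fpoly m k b (j + 1)) (gpoly m k b (j + 1)))
      (-(fpoly m k b j / gcd (fpoly m k b j) (gpoly m k b j))) := by
  obtain ⟨i, rfl⟩ : ∃ i, j = i + 1 := ⟨j - 1, by omega⟩
  have hfp := fun x hx => fg_pos n m k b hm hk hb x hx i (by omega)
  have hfr := f_rec m k b i
  have hgr := g_rec m k b i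
  have hbp : 0 < b (i + 2) := lt_of_le_of_ne (hb _ (by omega) (by omega)) (Ne.symm hbne)
  have hmp : 0 < m (i + 2) := hm _ (by omega) (by omega)
  change gcd (fpoly m k b (i + 2)) (gpoly m k b (i + 2)) = _ * (X - C (k (i + 2) / b (i + 2))) ∧
    Prec (fpoly m k b (i + 2) / gcd (fpoly m k b (i + 2)) (gpoly m k b (i + 2))) _
  change (pp5 k b (i + 2)) ∣ _ at hdvd
  generalize hf : fpoly m k b (i + 1) = f at *
  generalize hg : gpoly m k b (i + 1) = g at *
  have hf0 : f ≠ 0 := by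
    rintro rfl
    have := (hfp 0 le_rfl).1
    simp at this
  have hh0 : gcd f g ≠ 0 := fun h => hf0 ((gcd_eq_zero_iff _ _).1 h).1
  have hmonic : (gcd f g).Monic := by
    rw [← normalize_gcd]
    exact Polynomial.monic_normalize hh0
  have hF := EuclideanDomain.mul_div_cancel' hh0 (gcd_dvd_left f g)
  have hG := EuclideanDomain.mul_div_cancel' hh0 (gcd_dvd_right f g)
  rw [EuclideanDomain.mul_div_assoc _ (gcd_dvd_right f g)] at hyp
  have hcop : IsCoprime (f / gcd f g) (g / gcd f g) := by
    rw [← gcd_isUnit_iff]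
    exact isUnit_gcd_of_eq_mul_gcd hF.symm hG.symm hh0
  generalize f / gcd f g = F at *
  generalize g / gcd f g = G at *
  generalize gcd f g = h at *
  obtain ⟨H, hH⟩ := hdvd
  obtain ⟨s, c, d, α, β, hs, hcd, hα, hβ, hFe, hGe, h1, h2⟩ := hyp
  have hpos : ∀ i, 0 < α i := by
    intro l
    by_contra hl
    have h3 := (hfp (α l) (not_lt.1 hl)).1
    rw [← hF, hFe] at h3
    simp only [eval_mul, eval_C, eval_prod, eval_sub, eval_X] at h3
    rw [Finset.prod_eq_zero (Finset.mem_univ l) (by simp)] at h3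
    simp at h3
  obtain ⟨hne, hprec⟩ := core5 hs c d (k (i + 2)) (b (i + 2)) (m (i + 2)) hbp hmp hcd F G H α β
    hα hβ hpos hFe hGe h1 h2 hH
  have hp : pp5 k b (i + 2) = C (-b (i + 2)) * (X - C (k (i + 2) / b (i + 2))) := by
    have : C (k (i + 2)) = C (b (i + 2)) * C (k (i + 2) / b (i + 2)) := by
      rw [← C_mul]; congr 1; field_simp
    rw [pp5, this, C_neg]; ring
  have hu : IsUnit (C (-b (i + 2))) := isUnit_C.2 (neg_ne_zero.2 hbne).isUnit
  have hcop2 : IsCoprime F (H + G) := by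
    rw [hH]
    apply IsCoprime.mul_left
    · rw [hp, isCoprime_mul_unit_left_left hu]
      rw [(irreducible_X_sub_C _).coprime_iff_not_dvd, dvd_iff_isRoot]
      exact hne
    · rw [hH] at hcop
      have := hcop.of_mul_left_right
      have h5 := this.mul_add_left_right 1
      rwa [mul_one] at h5
  have hcop3 : IsCoprime (F - C (m (i + 2)) * X * (H + G)) (H + G) := by
    have := hcop2.add_mul_right_left (-(C (m (i + 2)) * X))
    have e : F - C (m (i + 2)) * X * (H + G) = F + -(C (m (i + 2)) * X) * (H + G) := by ring
    rw [e]
    exact this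
  have hP : fpoly m k b (i + 2) = (h * (X - C (k (i + 2) / b (i + 2)))) *
      (C (-b (i + 2)) * (F - C (m (i + 2)) * X * (H + G))) := by
    rw [hfr, ← hF, ← hG]
    have : h * F + pp5 k b (i + 2) * (h * G) = h * pp5 k b (i + 2) * (H + G) := by
      nth_rw 1 [hH]; ring
    rw [this, hp]; ring
  have hQ : gpoly m k b (i + 2) = (h * (X - C (k (i + 2) / b (i + 2)))) *
      (C (-b (i + 2)) * (H + G)) := by
    rw [hgr, ← hF, ← hG]
    nth_rw 1 [hH]
    rw [hp]; ring
  have hmon2 : (h * (X - C (k (i + 2) / b (i + 2)))).Monic := hmonic.mul (monic_X_sub_C _)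
  have hgcd : gcd (fpoly m k b (i + 2)) (gpoly m k b (i + 2)) =
      h * (X - C (k (i + 2) / b (i + 2))) := by
    have hcoe : h * (X - C (k (i + 2) / b (i + 2))) * C (-b (i + 2)) ≠ 0 :=
      mul_ne_zero hmon2.ne_zero hu.ne_zero
    rw [hP, hQ, gcd_mul_left, gcd_mul_left, hmon2.normalize_eq_self, normalize_eq_one.2 hu]
    rw [← normalize_gcd, normalize_eq_one.2 ((gcd_isUnit_iff _ _).2 hcop3)]
    simp
  refine ⟨hgcd, ?_⟩
  rw [hgcd, hP, mul_div_cancel_left₀ _ hmon2.ne_zero]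
  exact hprec
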